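/- arXiv:1008.5314 — 2 statements merged into one kernel-verified Lean document; each statement's English description precedes it below -/
import Mathlib

section
/- Let I, J, N ⊂ R be homogeneous ideals with N ⊆ I ∩ J, and let A, B, C be monomial ideals with respect to a fixed term order σ such that C ⊆ in(J), A = in(N), B = in(I). Suppose H_J(d) = H_I(d-ℓ) + H_N(d) - H_N(d-ℓ) for all d (J is obtained from I via an elementary biliaison of height ℓ on N) and C = A + fB with f a monomial of degree ℓ satisfying A : f = A (C is a Basic Double Link of degree ℓ of B on A). Then C = in(J). -/
open MvPolynomial

variable {K : Type*} [Field K]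

/-- The leading exponent (multidegree) of a polynomial with respect to a monomial order. -/
noncomputable def leadExp {σ : Type*} (m : MonomialOrder σ) (p : MvPolynomial σ K) : σ →₀ ℕ :=
  m.toSyn.symm (p.support.sup fun e => m.toSyn e)

/-- The initial ideal of `I` with respect to a monomial order. -/
noncomputable def initialIdeal {σ : Type*} (m : MonomialOrder σ)
    (I : Ideal (MvPolynomial σ K)) : Ideal (MvPolynomial σ K) :=
  Ideal.span ((fun p => (MvPolynomial.monomial (leadExp m p) (1 : K))) ''
    {p | p ∈ I ∧ p ≠ 0})

/-- An ideal of a polynomial ring is homogeneous (w.r.t. the standard grading). -/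
def IsHomogeneousIdeal {n : ℕ} (I : Ideal (MvPolynomial (Fin n) K)) : Prop :=
  ∀ p ∈ I, ∀ d : ℕ, MvPolynomial.homogeneousComponent d p ∈ I

/-- The Hilbert function of the ideal `I` in degree `d ∈ ℤ`. -/
noncomputable def idealHilbert {n : ℕ}
    (I : Ideal (MvPolynomial (Fin n) K)) (d : ℤ) : ℕ :=
  if d < 0 then 0 else
    Module.finrank K
      ((Submodule.restrictScalars K I) ⊓ MvPolynomial.homogeneousSubmodule (Fin n) K d.toNat :
        Submodule K (MvPolynomial (Fin n) K))

/-!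
Passing to initial ideals preserves Hilbert functions, since a linear subspace of a polynomial ring
has a basis consisting of one element for each of its leading exponents. In degree `d`, the ideal
`A + fB` is the sum of `A_d` and `f B_{d-ℓ}`, which meet in `f ((A : f) ∩ B)_{d-ℓ}`. As `A : f = A`,
its Hilbert function is therefore at least `H_A(d) + H_B(d-ℓ) - H_A(d-ℓ) = H_J(d)`, which leaves no
room for a strict inclusion into `in(J)`.
-/

section LeadingExponents

variable {σ R : Type*} (m : MonomialOrder σ)

/-- The exponents of the leading monomials of the nonzero elements of `S`, for `S` an ideal or a
linear subspace of a polynomial ring. -/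
def leadingExponents [CommSemiring R] (S : Set (MvPolynomial σ R)) : Set (σ →₀ ℕ) :=
  m.degree '' (S \ {0})

variable {m}

theorem linearIndependent_of_injective_degree [CommRing R] [NoZeroDivisors R] {ι : Type*}
    {v : ι → MvPolynomial σ R} (hv : ∀ i, v i ≠ 0)
    (hdeg : Function.Injective fun i => m.degree (v i)) : LinearIndependent R v := by
  classical
  rw [linearIndependent_iff']
  intro s c hsum i hi
  by_contra hci
  obtain ⟨t, ht, hmax⟩ := (s.filter (c · ≠ 0)).exists_max_image
    (fun i => m.toSyn (m.degree (v i))) ⟨i, by simp [hi, hci]⟩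
  obtain ⟨hts, hct⟩ := Finset.mem_filter.mp ht
  have coeff_other (j : ι) (hj : j ∈ s) (hjt : j ≠ t) : coeff (m.degree (v t)) (c j • v j) = 0 := by
    by_cases hcj : c j = 0
    · simp [hcj]
    · have hle := hmax j (Finset.mem_filter.mpr ⟨hj, hcj⟩)
      have hne : m.toSyn (m.degree (v j)) ≠ m.toSyn (m.degree (v t)) :=
        fun h => hjt (hdeg (m.toSyn.injective h))
      rw [coeff_smul, m.coeff_eq_zero_of_lt (lt_of_le_of_ne hle hne), smul_zero]
  have coeff_t : c t * m.leadingCoeff (v t) = 0 := calc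
    c t * m.leadingCoeff (v t) = coeff (m.degree (v t)) (∑ j ∈ s, c j • v j) := by
      rw [coeff_sum, Finset.sum_eq_single_of_mem t hts coeff_other, coeff_smul, smul_eq_mul,
        MonomialOrder.leadingCoeff]
    _ = 0 := by rw [hsum, coeff_zero]
  exact mul_ne_zero hct (m.leadingCoeff_ne_zero_iff.mpr (hv t)) coeff_t

theorem degree_sub_lt_of_leadingCoeff_eq [CommRing R] {p q : MvPolynomial σ R}
    (hdeg : m.degree q = m.degree p) (hcoeff : m.leadingCoeff q = m.leadingCoeff p)
    (hne : p - q ≠ 0) : m.toSyn (m.degree (p - q)) < m.toSyn (m.degree p) := by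
  have hle : m.toSyn (m.degree (p - q)) ≤ m.toSyn (m.degree p) := by
    simpa [hdeg] using m.degree_sub_le (f := p) (g := q)
  refine lt_of_le_of_ne hle fun heq => m.leadingCoeff_ne_zero_iff.mpr hne ?_
  unfold MonomialOrder.leadingCoeff at hcoeff ⊢
  rw [m.toSyn.injective heq, coeff_sub, ← hcoeff, hdeg, sub_self]

theorem le_span_range_of_degree_eq {V : Submodule K (MvPolynomial σ K)}
    {q : leadingExponents m (V : Set (MvPolynomial σ K)) → MvPolynomial σ K}
    (hqV : ∀ a, q a ∈ V) (hq0 : ∀ a, q a ≠ 0) (hdeg : ∀ a, m.degree (q a) = a) :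
    V ≤ Submodule.span K (Set.range q) := by
  intro p hp
  induction h : m.toSyn (m.degree p) using WellFoundedLT.induction generalizing p with
  | ind _ ih =>
    subst h
    rcases eq_or_ne p 0 with rfl | hp0
    · exact zero_mem _
    let a : leadingExponents m (V : Set (MvPolynomial σ K)) := ⟨m.degree p, p, ⟨hp, hp0⟩, rfl⟩
    let c := m.leadingCoeff p / m.leadingCoeff (q a)
    have hlc : m.leadingCoeff (q a) ≠ 0 := m.leadingCoeff_ne_zero_iff.mpr (hq0 a)
    have hc : c ≠ 0 := div_ne_zero (m.leadingCoeff_ne_zero_iff.mpr hp0) hlc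
    have hdeg_q : m.degree (q a) = m.degree p := hdeg a
    have hdeg_smul : m.degree (c • q a) = m.degree p :=
      (m.degree_smul_of_isRegular (.of_ne_zero hc)).trans hdeg_q
    have hlc_smul : m.leadingCoeff (c • q a) = m.leadingCoeff p := by
      rw [MonomialOrder.leadingCoeff, hdeg_smul, ← hdeg_q, coeff_smul, smul_eq_mul]
      exact div_mul_cancel₀ _ hlc
    have hsub : p - c • q a ∈ Submodule.span K (Set.range q) := by
      rcases eq_or_ne (p - c • q a) 0 with h0 | hne
      · rw [h0]
        exact zero_mem _
      · exact ih _ (degree_sub_lt_of_leadingCoeff_eq hdeg_smul hlc_smul hne)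
          (V.sub_mem hp (V.smul_mem c (hqV a))) rfl
    rw [← sub_add_cancel p (c • q a)]
    exact add_mem hsub (Submodule.smul_mem _ c (Submodule.subset_span (Set.mem_range_self a)))

variable (m) in
theorem finrank_eq_ncard_leadingExponents (V : Submodule K (MvPolynomial σ K)) :
    Module.finrank K V = (leadingExponents m (V : Set (MvPolynomial σ K))).ncard := by
  choose q hq hdeg using fun a : leadingExponents m (V : Set (MvPolynomial σ K)) => a.2
  have hq0 : ∀ a, q a ≠ 0 := fun a => (hq a).2
  have hli : LinearIndependent K q :=
    linearIndependent_of_injective_degree (m := m) hq0 fun a b hab =>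
      Subtype.ext ((hdeg a).symm.trans (hab.trans (hdeg b)))
  have hspan : Submodule.span K (Set.range q) = V :=
    le_antisymm (Submodule.span_le.mpr (Set.range_subset_iff.mpr fun a => (hq a).1))
      (le_span_range_of_degree_eq (fun a => (hq a).1) hq0 hdeg)
  rw [← Nat.card_coe_set_eq, ← Module.finrank_eq_nat_card_basis (Module.Basis.span hli), hspan]

theorem mem_leadingExponents_of_le [CommRing R] [IsDomain R] {I : Ideal (MvPolynomial σ R)}
    {a b : σ →₀ ℕ} (ha : a ∈ leadingExponents m (I : Set (MvPolynomial σ R))) (hab : a ≤ b) :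
    b ∈ leadingExponents m (I : Set (MvPolynomial σ R)) := by
  classical
  obtain ⟨p, ⟨hp, hp0⟩, rfl⟩ := ha
  have hmon : monomial (b - m.degree p) (1 : R) ≠ 0 := by simp
  refine ⟨monomial (b - m.degree p) 1 * p, ⟨I.mul_mem_left _ hp, mul_ne_zero hmon hp0⟩, ?_⟩
  rw [m.degree_mul hmon hp0, m.degree_monomial, if_neg one_ne_zero, tsub_add_cancel_of_le hab]

theorem initialIdeal_eq_span_leadingExponents (I : Ideal (MvPolynomial σ K)) :
    initialIdeal m I = Ideal.span ((fun a => monomial a (1 : K)) ''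
      leadingExponents m (I : Set (MvPolynomial σ K))) := by
  rw [leadingExponents, Set.image_image]
  rfl

theorem leadingExponents_initialIdeal (I : Ideal (MvPolynomial σ K)) :
    leadingExponents m (initialIdeal m I : Set (MvPolynomial σ K)) =
      leadingExponents m (I : Set (MvPolynomial σ K)) := by
  classical
  rw [initialIdeal_eq_span_leadingExponents]
  refine Set.Subset.antisymm ?_ fun a ha => ?_
  · rintro _ ⟨p, ⟨hp, hp0⟩, rfl⟩
    obtain ⟨a, ha, hle⟩ := mem_ideal_span_monomial_image.mp hp _ (m.degree_mem_support hp0)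
    exact mem_leadingExponents_of_le ha hle
  · refine ⟨monomial a 1, ⟨Ideal.subset_span (Set.mem_image_of_mem _ ha), by simp⟩, ?_⟩
    rw [m.degree_monomial, if_neg one_ne_zero]

end LeadingExponents

section GradedPieces

variable {σ R : Type*}

/-- The degree `d` homogeneous elements of the ideal `I`, as a linear subspace. -/
noncomputable def gradedPiece [CommSemiring R] (I : Ideal (MvPolynomial σ R)) (d : ℕ) :
    Submodule R (MvPolynomial σ R) :=
  I.restrictScalars R ⊓ homogeneousSubmodule σ R d

instance finite_gradedPiece [Finite σ] (I : Ideal (MvPolynomial σ K)) (d : ℕ) :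
    Module.Finite K (gradedPiece I d) :=
  have : Module.Finite K (homogeneousSubmodule σ K d) :=
    Module.Finite.iff_fg.mpr (homogeneousSubmodule_fg σ K d)
  Submodule.finiteDimensional_of_le inf_le_right

theorem gradedPiece_mono [CommSemiring R] {I J : Ideal (MvPolynomial σ R)} (h : I ≤ J) (d : ℕ) :
    gradedPiece I d ≤ gradedPiece J d :=
  inf_le_inf_right _ h

attribute [local instance] MvPolynomial.gradedAlgebra

theorem isHomogeneous_initialIdeal (m : MonomialOrder σ) (I : Ideal (MvPolynomial σ K)) :
    (initialIdeal m I).IsHomogeneous (homogeneousSubmodule σ K) := by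
  refine Ideal.homogeneous_span _ _ ?_
  rintro _ ⟨p, -, rfl⟩
  exact ⟨_, isHomogeneous_monomial 1 rfl⟩

theorem leadingExponents_gradedPiece (m : MonomialOrder σ) [CommSemiring R]
    {I : Ideal (MvPolynomial σ R)} (hI : I.IsHomogeneous (homogeneousSubmodule σ R)) (d : ℕ) :
    leadingExponents m (gradedPiece I d : Set (MvPolynomial σ R)) =
      leadingExponents m (I : Set (MvPolynomial σ R)) ∩ {a | a.degree = d} := by
  ext a
  constructor
  · rintro ⟨p, ⟨⟨hpI, hpd⟩, hp0⟩, rfl⟩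
    exact ⟨⟨p, ⟨hpI, hp0⟩, rfl⟩, (IsHomogeneous.degree_eq_sum_deg_support hpd
      (m.degree_mem_support hp0)).symm⟩
  · rintro ⟨⟨p, ⟨hpI, hp0⟩, rfl⟩, hd : (m.degree p).degree = d⟩
    have hcoeff : coeff (m.degree p) (homogeneousComponent d p) ≠ 0 := by
      rw [coeff_homogeneousComponent, if_pos hd]
      exact m.leadingCoeff_ne_zero_iff.mpr hp0
    have hle : m.toSyn (m.degree (homogeneousComponent d p)) ≤ m.toSyn (m.degree p) :=
      m.degree_le_degree_of_support_subset fun b hb => by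
        rw [support_homogeneousComponent] at hb
        exact Finset.mem_of_mem_filter b hb
    refine ⟨homogeneousComponent d p, ⟨⟨homogeneousComponent_mem_of_mem hI hpI d,
      homogeneousComponent_mem d p⟩, ne_zero_iff.mpr ⟨_, hcoeff⟩⟩, m.toSyn.injective ?_⟩
    exact le_antisymm hle (m.le_degree (mem_support_iff.mpr hcoeff))

theorem finrank_gradedPiece_initialIdeal (m : MonomialOrder σ) {I : Ideal (MvPolynomial σ K)}
    (hI : I.IsHomogeneous (homogeneousSubmodule σ K)) (d : ℕ) :
    Module.finrank K (gradedPiece (initialIdeal m I) d) = Module.finrank K (gradedPiece I d) := by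
  rw [finrank_eq_ncard_leadingExponents m, finrank_eq_ncard_leadingExponents m,
    leadingExponents_gradedPiece m hI, leadingExponents_gradedPiece m
    (isHomogeneous_initialIdeal m I), leadingExponents_initialIdeal]

theorem gradedPiece_eq_map_homogeneousComponent [CommSemiring R] {I : Ideal (MvPolynomial σ R)}
    (hI : I.IsHomogeneous (homogeneousSubmodule σ R)) (d : ℕ) :
    gradedPiece I d = (I.restrictScalars R).map (homogeneousComponent d) := by
  refine le_antisymm (fun p hp => ⟨p, hp.1, homogeneousComponent_eq_self hp.2⟩) ?_
  rintro _ ⟨p, hp, rfl⟩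
  exact ⟨homogeneousComponent_mem_of_mem hI hp d, homogeneousComponent_mem d p⟩

theorem gradedPiece_sup [CommSemiring R] {I J : Ideal (MvPolynomial σ R)}
    (hI : I.IsHomogeneous (homogeneousSubmodule σ R))
    (hJ : J.IsHomogeneous (homogeneousSubmodule σ R)) (d : ℕ) :
    gradedPiece (I ⊔ J) d = gradedPiece I d ⊔ gradedPiece J d := by
  rw [gradedPiece_eq_map_homogeneousComponent (hI.sup hJ),
    gradedPiece_eq_map_homogeneousComponent hI, gradedPiece_eq_map_homogeneousComponent hJ,
    Submodule.restrictScalars_sup, Submodule.map_sup]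

theorem isHomogeneous_span_singleton_mul [CommSemiring R] {f : MvPolynomial σ R} {ℓ : ℕ}
    (hf : f.IsHomogeneous ℓ) {I : Ideal (MvPolynomial σ R)}
    (hI : I.IsHomogeneous (homogeneousSubmodule σ R)) :
    (Ideal.span {f} * I).IsHomogeneous (homogeneousSubmodule σ R) :=
  (Ideal.homogeneous_span _ _ (by rintro _ rfl; exact ⟨ℓ, hf⟩)).mul hI

theorem homogeneousComponent_mul_add [CommSemiring R] {f : MvPolynomial σ R} {ℓ : ℕ}
    (hf : f.IsHomogeneous ℓ) (p : MvPolynomial σ R) (d : ℕ) :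
    homogeneousComponent (ℓ + d) (f * p) = f * homogeneousComponent d p := by
  have h := DirectSum.coe_decompose_mul_add_of_left_mem (homogeneousSubmodule σ R) (b := p)
    (i := ℓ) (j := d) hf
  rwa [← decomposition.decompose'_apply, ← decomposition.decompose'_apply]

theorem homogeneousComponent_mul_of_lt [CommSemiring R] {f : MvPolynomial σ R} {ℓ : ℕ}
    (hf : f.IsHomogeneous ℓ) (p : MvPolynomial σ R) {d : ℕ} (hd : d < ℓ) :
    homogeneousComponent d (f * p) = 0 := by
  have h := DirectSum.coe_decompose_mul_of_left_mem_of_not_le (homogeneousSubmodule σ R) (b := p)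
    (i := ℓ) hf hd.not_ge
  rwa [← decomposition.decompose'_apply]

theorem restrictScalars_span_singleton_mul [CommSemiring R] (f : MvPolynomial σ R)
    (I : Ideal (MvPolynomial σ R)) :
    (Ideal.span {f} * I).restrictScalars R =
      (I.restrictScalars R).map (LinearMap.mulLeft R f) :=
  SetLike.ext fun _ => Ideal.mem_span_singleton_mul

theorem gradedPiece_span_singleton_mul_add [CommSemiring R] {f : MvPolynomial σ R} {ℓ : ℕ}
    (hf : f.IsHomogeneous ℓ) {I : Ideal (MvPolynomial σ R)}
    (hI : I.IsHomogeneous (homogeneousSubmodule σ R)) (d : ℕ) :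
    gradedPiece (Ideal.span {f} * I) (ℓ + d) = (gradedPiece I d).map (LinearMap.mulLeft R f) := by
  rw [gradedPiece_eq_map_homogeneousComponent (isHomogeneous_span_singleton_mul hf hI),
    gradedPiece_eq_map_homogeneousComponent hI, restrictScalars_span_singleton_mul,
    ← Submodule.map_comp, ← Submodule.map_comp]
  congr 1
  exact LinearMap.ext fun p => homogeneousComponent_mul_add hf p d

theorem gradedPiece_span_singleton_mul_of_lt [CommSemiring R] {f : MvPolynomial σ R} {ℓ : ℕ}
    (hf : f.IsHomogeneous ℓ) {I : Ideal (MvPolynomial σ R)}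
    (hI : I.IsHomogeneous (homogeneousSubmodule σ R)) {d : ℕ} (hd : d < ℓ) :
    gradedPiece (Ideal.span {f} * I) d = ⊥ := by
  rw [gradedPiece_eq_map_homogeneousComponent (isHomogeneous_span_singleton_mul hf hI),
    restrictScalars_span_singleton_mul, eq_bot_iff]
  rintro _ ⟨_, ⟨q, -, rfl⟩, rfl⟩
  exact homogeneousComponent_mul_of_lt hf q hd

theorem gradedPiece_inf_comap_mulLeft [CommSemiring R] {f : MvPolynomial σ R} {ℓ : ℕ}
    (hf : f.IsHomogeneous ℓ) (A B : Ideal (MvPolynomial σ R)) (d : ℕ) :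
    gradedPiece B d ⊓ (gradedPiece A (ℓ + d)).comap (LinearMap.mulLeft R f) =
      gradedPiece (A.colon {f} ⊓ B) d := by
  ext p
  constructor
  · rintro ⟨⟨hpB, hpd⟩, hfp, -⟩
    exact ⟨⟨Submodule.mem_colon_singleton.mpr (by rwa [smul_eq_mul, mul_comm]), hpB⟩, hpd⟩
  · rintro ⟨⟨hpA, hpB⟩, hpd⟩
    have hfp : f * p ∈ A := by simpa [mul_comm] using Submodule.mem_colon_singleton.mp hpA
    exact ⟨⟨hpB, hpd⟩, hfp, hf.mul hpd⟩

theorem finrank_gradedPiece_sup_span_singleton_mul [Finite σ] {f : MvPolynomial σ K} {ℓ : ℕ}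
    (hf : f.IsHomogeneous ℓ) (hf0 : f ≠ 0) {A B : Ideal (MvPolynomial σ K)}
    (hA : A.IsHomogeneous (homogeneousSubmodule σ K))
    (hB : B.IsHomogeneous (homogeneousSubmodule σ K)) (d : ℕ) :
    Module.finrank K (gradedPiece (A ⊔ Ideal.span {f} * B) (ℓ + d)) +
        Module.finrank K (gradedPiece (A.colon {f} ⊓ B) d) =
      Module.finrank K (gradedPiece A (ℓ + d)) + Module.finrank K (gradedPiece B d) := by
  have hinj : Function.Injective (LinearMap.mulLeft K f) := mul_right_injective₀ hf0
  have finrank_map (V : Submodule K (MvPolynomial σ K)) :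
      Module.finrank K (V.map (LinearMap.mulLeft K f)) = Module.finrank K V :=
    (Submodule.equivMapOfInjective _ hinj V).finrank_eq.symm
  have hinf : gradedPiece A (ℓ + d) ⊓ (gradedPiece B d).map (LinearMap.mulLeft K f) =
      (gradedPiece (A.colon {f} ⊓ B) d).map (LinearMap.mulLeft K f) := by
    rw [inf_comm, Submodule.map_inf_eq_map_inf_comap, gradedPiece_inf_comap_mulLeft hf]
  rw [gradedPiece_sup hA (isHomogeneous_span_singleton_mul hf hB),
    gradedPiece_span_singleton_mul_add hf hB, ← finrank_map (gradedPiece (A.colon {f} ⊓ B) d),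
    ← hinf, Submodule.finrank_sup_add_finrank_inf_eq, finrank_map]

theorem eq_of_le_of_finrank_gradedPiece_le [Finite σ] {C D : Ideal (MvPolynomial σ K)}
    (hD : D.IsHomogeneous (homogeneousSubmodule σ K)) (hCD : C ≤ D)
    (hrank : ∀ d, Module.finrank K (gradedPiece D d) ≤ Module.finrank K (gradedPiece C d)) :
    C = D := by
  refine le_antisymm hCD fun p hp => ?_
  rw [← sum_homogeneousComponent p]
  refine sum_mem fun d _ => ?_
  have heq : gradedPiece C d = gradedPiece D d :=
    Submodule.eq_of_le_of_finrank_le (gradedPiece_mono hCD d) (hrank d)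
  have hpd : homogeneousComponent d p ∈ gradedPiece D d :=
    ⟨homogeneousComponent_mem_of_mem hD hp d, homogeneousComponent_mem d p⟩
  exact (heq ▸ hpd).1

end GradedPieces

section HilbertFunction

attribute [local instance] MvPolynomial.gradedAlgebra

variable {n : ℕ}

theorem IsHomogeneousIdeal.isHomogeneous {I : Ideal (MvPolynomial (Fin n) K)}
    (hI : IsHomogeneousIdeal I) : I.IsHomogeneous (homogeneousSubmodule (Fin n) K) := by
  intro d p hp
  have h := hI p hp d
  rwa [← decomposition.decompose'_apply] at h

theorem idealHilbert_natCast (I : Ideal (MvPolynomial (Fin n) K)) (d : ℕ) :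
    idealHilbert I d = Module.finrank K (gradedPiece I d) := by
  rw [idealHilbert, if_neg (Int.natCast_nonneg d).not_gt, Int.toNat_natCast, gradedPiece]

theorem idealHilbert_of_neg (I : Ideal (MvPolynomial (Fin n) K)) {d : ℤ} (hd : d < 0) :
    idealHilbert I d = 0 :=
  if_pos hd

theorem idealHilbert_initialIdeal (m : MonomialOrder (Fin n)) {I : Ideal (MvPolynomial (Fin n) K)}
    (hI : IsHomogeneousIdeal I) (d : ℤ) : idealHilbert (initialIdeal m I) d = idealHilbert I d := by
  rcases lt_or_ge d 0 with hd | hd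
  · rw [idealHilbert_of_neg _ hd, idealHilbert_of_neg _ hd]
  · lift d to ℕ using hd
    rw [idealHilbert_natCast, idealHilbert_natCast,
      finrank_gradedPiece_initialIdeal m hI.isHomogeneous]

theorem idealHilbert_mono {I J : Ideal (MvPolynomial (Fin n) K)} (h : I ≤ J) (d : ℤ) :
    idealHilbert I d ≤ idealHilbert J d := by
  rcases lt_or_ge d 0 with hd | hd
  · rw [idealHilbert_of_neg _ hd, idealHilbert_of_neg _ hd]
  · lift d to ℕ using hd
    rw [idealHilbert_natCast, idealHilbert_natCast]
    exact Submodule.finrank_mono (gradedPiece_mono h d)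

theorem idealHilbert_sup_span_singleton_mul {f : MvPolynomial (Fin n) K} {ℓ : ℕ}
    (hf : f.IsHomogeneous ℓ) (hf0 : f ≠ 0) {A B : Ideal (MvPolynomial (Fin n) K)}
    (hA : A.IsHomogeneous (homogeneousSubmodule (Fin n) K))
    (hB : B.IsHomogeneous (homogeneousSubmodule (Fin n) K)) (d : ℕ) :
    idealHilbert (A ⊔ Ideal.span {f} * B) d + idealHilbert (A.colon {f} ⊓ B) (d - ℓ) =
      idealHilbert A d + idealHilbert B (d - ℓ) := by
  rcases lt_or_ge d ℓ with hlt | hge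
  · have hneg : (d : ℤ) - ℓ < 0 := by omega
    rw [idealHilbert_of_neg _ hneg, idealHilbert_of_neg _ hneg, idealHilbert_natCast,
      idealHilbert_natCast, gradedPiece_sup hA (isHomogeneous_span_singleton_mul hf hB),
      gradedPiece_span_singleton_mul_of_lt hf hB hlt, sup_bot_eq]
  · obtain ⟨k, rfl⟩ := Nat.exists_eq_add_of_le hge
    have hk : ((ℓ + k : ℕ) : ℤ) - ℓ = k := by omega
    rw [hk]
    simp only [idealHilbert_natCast]
    exact finrank_gradedPiece_sup_span_singleton_mul hf hf0 hA hB k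

theorem eq_of_le_of_idealHilbert_le {C D : Ideal (MvPolynomial (Fin n) K)}
    (hD : D.IsHomogeneous (homogeneousSubmodule (Fin n) K)) (hCD : C ≤ D)
    (hHilb : ∀ d : ℕ, idealHilbert D d ≤ idealHilbert C d) : C = D :=
  eq_of_le_of_finrank_gradedPiece_le hD hCD fun d => by
    simpa only [idealHilbert_natCast] using hHilb d

theorem basicDoubleLink_initialIdeal_general (m : MonomialOrder (Fin n))
    {I J N : Ideal (MvPolynomial (Fin n) K)}
    (hI : IsHomogeneousIdeal I) (hJ : IsHomogeneousIdeal J) (hN : IsHomogeneousIdeal N)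
    {ℓ : ℕ} (hHilb : ∀ d : ℤ, (idealHilbert J d : ℤ) =
      idealHilbert I (d - ℓ) + idealHilbert N d - idealHilbert N (d - ℓ))
    {f : MvPolynomial (Fin n) K} (hf : f.IsHomogeneous ℓ) (hf0 : f ≠ 0)
    (hcolon : (initialIdeal m N).colon {f} = initialIdeal m N)
    (hle : initialIdeal m N ⊔ Ideal.span {f} * initialIdeal m I ≤ initialIdeal m J) :
    initialIdeal m N ⊔ Ideal.span {f} * initialIdeal m I = initialIdeal m J := by
  refine eq_of_le_of_idealHilbert_le (isHomogeneous_initialIdeal m J) hle fun d => ?_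
  have hlink := idealHilbert_sup_span_singleton_mul hf hf0 (isHomogeneous_initialIdeal m N)
    (isHomogeneous_initialIdeal m I) d
  have hinter := idealHilbert_mono
    (inf_le_left : initialIdeal m N ⊓ initialIdeal m I ≤ initialIdeal m N) (d - ℓ)
  rw [hcolon, idealHilbert_initialIdeal m hN, idealHilbert_initialIdeal m hI] at hlink
  rw [idealHilbert_initialIdeal m hN] at hinter
  rw [idealHilbert_initialIdeal m hJ]
  have hJd := hHilb d
  omega

end HilbertFunction

/-- **the key lemma.** Let `I, J, N` be homogeneous ideals with `N ⊆ I ∩ J`,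
and let `A = in(N)`, `B = in(I)` and `C ⊆ in(J)` with `C = A + f·B` a Basic Double Link of
degree `ℓ`, where `f` is a monomial of degree `ℓ` with `A : f = A`.  If moreover
`H_J(d) = H_I(d-ℓ) + H_N(d) - H_N(d-ℓ)` for all `d` (elementary biliaison of height `ℓ`),
then `C = in(J)`. -/
theorem basicDoubleLink_initialIdeal {n : ℕ} (m : MonomialOrder (Fin n))
    (I J N : Ideal (MvPolynomial (Fin n) K))
    (hI : IsHomogeneousIdeal I) (hJ : IsHomogeneousIdeal J) (hN : IsHomogeneousIdeal N)
    (hNI : N ≤ I) (hNJ : N ≤ J)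
    (A B C : Ideal (MvPolynomial (Fin n) K))
    (hA : A = initialIdeal m N) (hB : B = initialIdeal m I)
    (hCJ : C ≤ initialIdeal m J)
    (ℓ : ℕ)
    (hHilb : ∀ d : ℤ, (idealHilbert J d : ℤ) =
      idealHilbert I (d - ℓ) + idealHilbert N d - idealHilbert N (d - ℓ))
    (e : Fin n →₀ ℕ) (f : MvPolynomial (Fin n) K)
    (hf : f = MvPolynomial.monomial e (1 : K)) (hdeg : (e.sum fun _ v => v) = ℓ)
    (hcolon : Submodule.colon A (Ideal.span {f}) = A)
    (hC : C = A ⊔ Ideal.span {f} * B) :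
    C = initialIdeal m J := by
  subst hA hB hf hdeg hC
  exact basicDoubleLink_initialIdeal_general m hI hJ hN hHilb (isHomogeneous_monomial 1 rfl)
    (by simp) (Ideal.colon_span.symm.trans hcolon) hCJ
end

section
/- Let A ⊆ B be homogeneous ideals of R = K[x_0,...,x_n] with ht A = ht B - 1, and let f be homogeneous of degree d with A : f = A. Then the Basic Double Link C = A + fB satisfies ht C = ht B; moreover if B is unmixed and R/A is Cohen-Macaulay then C is unmixed. -/
open MvPolynomial

variable {K : Type*} [Field K]

/-- The height of an ideal. -/
noncomputable def idealHeight {R : Type*} [CommRing R] (I : Ideal R) : ℕ∞ :=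
  ⨅ (p : PrimeSpectrum R) (_ : I ≤ p.asIdeal), Order.height p

set_option synthInstance.maxHeartbeats 1000000 in
/-- `R/I` is Cohen-Macaulay: there is a regular sequence on `R/I`, consisting of elements of
the irrelevant maximal ideal, whose length equals the Krull dimension of `R/I`. -/
def QuotientIsCohenMacaulay {σ : Type*} (I : Ideal (MvPolynomial σ K)) : Prop :=
  ∃ rs : List (MvPolynomial σ K ⧸ I),
    (∀ x ∈ rs, x ∈ (Ideal.span (Set.range (MvPolynomial.X : σ → MvPolynomial σ K))).map
      (Ideal.Quotient.mk I)) ∧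
    RingTheory.Sequence.IsRegular (MvPolynomial σ K ⧸ I) rs ∧
    (rs.length : WithBot ℕ∞) = ringKrullDim (MvPolynomial σ K ⧸ I)

/-- An ideal is unmixed if all its associated primes have the same height, namely the height
of the ideal itself. -/
def IsUnmixed {n : ℕ} (I : Ideal (MvPolynomial (Fin n) K)) : Prop :=
  ∀ p ∈ associatedPrimes (MvPolynomial (Fin n) K) (MvPolynomial (Fin n) K ⧸ I),
    idealHeight p = idealHeight I

/-!
Since `f` is regular on `R/A`, multiplication by `f` gives an exact sequence
`0 → R/B → R/(A + fB) → R/(A + (f)) → 0`, so every associated prime of `C = A + fB` is associated to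
`B` or to `A + (f)`. A prime over `C` contains `B`, or else it contains `A` and the element `f`,
which lies in no associated prime of `R/A`; in both cases its height is at least `ht A + 1 = ht B`.

It remains to bound the height of an associated prime `P` of `A + (f)` by `ht A + 1`. Let `m` be the
ideal of the variables of `R = K[x_1, …, x_n]` and let `s = dim R/A`. The depth of `m` on `R/A` is
`s`, so on `R/(A + (f))` it is at least `s - 1`. The depth of a module is at most the coheight of
each of its associated primes in `m`, hence `coht P ≥ s - 1`. The same principle applied to the
regular sequence `x_1, …, x_n` gives `ht Q + coht Q ≥ n` for all primes `Q ⊆ m`, in particular for a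
prime `Q` over `A` with `ht Q = ht A`, so that `n ≤ ht A + s`. As `ht P + coht P ≤ dim R = n`, this
yields `ht P ≤ ht A + 1`. Homogeneity places the associated primes of `A` and `A + (f)` inside `m`.
-/

open CategoryTheory Abelian
open RingTheory.Sequence
open scoped Pointwise

universe u v

/-- `GradeGE I M s` says that the grade (depth) of the ideal `I` on the module `M` is at least `s`:
some weakly `M`-regular sequence of length `s` consists of elements of `I`. Weak regularity makes
this hold for every `s` when `M` is finite and `IM = M`, in accordance with the convention that the
grade is then infinite. -/
def GradeGE {R : Type*} [CommRing R] (I : Ideal R) (M : Type*) [AddCommGroup M] [Module R M]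
    (s : ℕ) : Prop :=
  ∃ rs : List R, rs.length = s ∧ (∀ r ∈ rs, r ∈ I) ∧ IsWeaklyRegular M rs

section Modules

variable {R : Type u} {M : Type v} [CommRing R] [AddCommGroup M] [Module R M]

lemma isRegular_of_isWeaklyRegular_of_smul_top_ne_top {I : Ideal R}
    (hI : I • (⊤ : Submodule R M) ≠ ⊤) {rs : List R} (hrs : ∀ r ∈ rs, r ∈ I)
    (hM : IsWeaklyRegular M rs) : IsRegular M rs := by
  refine ⟨hM, fun h ↦ hI (top_le_iff.1 (h.le.trans (Submodule.smul_mono_left ?_)))⟩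
  exact Ideal.span_le.2 hrs

lemma notMem_of_mem_associatedPrimes_of_isSMulRegular {P : Ideal R} (hP : P ∈ associatedPrimes R M)
    {x : R} (hx : IsSMulRegular M x) : x ∉ P := by
  intro hxP
  obtain ⟨hprime, y, rfl⟩ := hP
  obtain ⟨k, hk⟩ := Ideal.mem_radical_iff.1 hxP
  rw [Submodule.mem_colon_singleton, Submodule.mem_bot] at hk
  have hy : y = 0 := (hx.pow k).right_eq_zero_of_smul hk
  exact hprime.ne_top (by simp [hy])

lemma quotSMulTop_map_subtype_torsionBySet_injective {x : R} (hx : IsSMulRegular M x) (S : Set R) :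
    Function.Injective (QuotSMulTop.map x (Submodule.torsionBySet R M S).subtype) := by
  refine (injective_iff_map_eq_zero _).2 fun n hn ↦ ?_
  obtain ⟨n, rfl⟩ := Submodule.Quotient.mk_surjective _ n
  obtain ⟨y, -, hy⟩ : (n : M) ∈ x • (⊤ : Submodule R M) := (Submodule.Quotient.mk_eq_zero _).1 hn
  replace hy : x • y = n := hy
  have hyS : y ∈ Submodule.torsionBySet R M S := by
    refine (Submodule.mem_torsionBySet_iff S y).2 fun a ↦ hx ?_
    dsimp only
    rw [smul_comm, hy, (Submodule.mem_torsionBySet_iff S _).1 n.2 a, smul_zero]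
  exact (Submodule.Quotient.mk_eq_zero _).2
    (Submodule.mem_smul_pointwise_iff_exists _ _ _ |>.2 ⟨⟨y, hyS⟩, trivial, Subtype.ext hy⟩)

variable [Module.Finite R M]

lemma mem_support_of_mem_associatedPrimes {P : PrimeSpectrum R}
    (hP : P.asIdeal ∈ associatedPrimes R M) : P ∈ Module.support R M :=
  Module.mem_support_iff_of_finite.2
    (by simpa only [Submodule.annihilator_top] using hP.annihilator_le)

lemma smul_top_ne_top_iff_exists_mem_support {I : Ideal R} :
    I • (⊤ : Submodule R M) ≠ ⊤ ↔ ∃ p ∈ Module.support R M, I ≤ p.asIdeal := by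
  rw [← Submodule.Quotient.nontrivial_iff, ← Module.nonempty_support_iff (R := R),
    Module.support_quotient]
  rfl

lemma mem_support_quotSMulTop_iff {x : R} {p : PrimeSpectrum R} :
    p ∈ Module.support R (QuotSMulTop x M) ↔ p ∈ Module.support R M ∧ x ∈ p.asIdeal := by
  simp [Module.support_quotSMulTop, PrimeSpectrum.mem_zeroLocus]

variable [IsNoetherianRing R]

lemma exists_mem_associatedPrimes_le_of_mem_support {p : PrimeSpectrum R}
    (hp : p ∈ Module.support R M) : ∃ P ∈ associatedPrimes R M, P ≤ p.asIdeal := by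
  obtain ⟨P, hP, hPp⟩ := Ideal.exists_minimalPrimes_le (Module.mem_support_iff_of_finite.1 hp)
  exact ⟨P, Module.associatedPrimes.minimalPrimes_annihilator_subset_associatedPrimes R M hP, hPp⟩

variable (M) in
lemma exists_mem_isSMulRegular_or_exists_le_associatedPrimes (I : Ideal R) :
    (∃ x ∈ I, IsSMulRegular M x) ∨ ∃ P ∈ associatedPrimes R M, I ≤ P := by
  by_contra! ⟨hreg, hle⟩
  have hunion : (I : Set R) ⊆ ⋃ P ∈ associatedPrimes R M, (P : Set R) := by
    rw [biUnion_associatedPrimes_eq_compl_regular]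
    exact hreg
  obtain ⟨P, hP, hIP⟩ := (Ideal.subset_union_prime_finite (associatedPrimes.finite R M) ⊥ ⊥
    fun P hP _ _ ↦ hP.isPrime).1 hunion
  exact hle P hP hIP

lemma gradeGE_iff_subsingleton_ext [Small.{v} R] {I : Ideal R}
    (hI : I • (⊤ : Submodule R M) ≠ ⊤) {s : ℕ} :
    GradeGE I M s ↔ ∀ i < s, Subsingleton
      (Ext (ModuleCat.of R (Shrink.{v} (R ⧸ I))) (ModuleCat.of R M) i) := by
  refine Iff.trans ?_
    ((ModuleCat.exists_isRegular_tfae I s (.of R M) hI.lt_top).out 3 1 rfl rfl)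
  constructor
  · rintro ⟨rs, hlen, hrs, hreg⟩
    exact ⟨rs, hlen, hrs, isRegular_of_isWeaklyRegular_of_smul_top_ne_top hI hrs hreg⟩
  · rintro ⟨rs, hlen, hrs, hreg⟩
    exact ⟨rs, hlen, hrs, hreg.toIsWeaklyRegular⟩

-- The given regular sequence need not start with `x`, so this goes through the vanishing of
-- `Ext^i(R/I, M)` and the long exact sequence of `0 → M → M → M/xM → 0`.
lemma GradeGE.quotSMulTop [Small.{v} R] {I : Ideal R} (hI : I • (⊤ : Submodule R M) ≠ ⊤) {s : ℕ}
    (hM : GradeGE I M (s + 1)) {x : R} (hxI : x ∈ I) (hx : IsSMulRegular M x) :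
    GradeGE I (QuotSMulTop x M) s := by
  have hI' : I • (⊤ : Submodule R (QuotSMulTop x M)) ≠ ⊤ := by
    rw [smul_top_ne_top_iff_exists_mem_support] at hI ⊢
    obtain ⟨p, hp, hIp⟩ := hI
    exact ⟨p, mem_support_quotSMulTop_iff.2 ⟨hp, hIp hxI⟩, hIp⟩
  rw [gradeGE_iff_subsingleton_ext hI] at hM
  rw [gradeGE_iff_subsingleton_ext hI']
  intro i hi
  have hzero := AddCommGrpCat.isZero_of_iff_subsingleton.2 (hM i (by lia))
  have hzero_succ := AddCommGrpCat.isZero_of_iff_subsingleton.2 (hM (i + 1) (by lia))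
  exact AddCommGrpCat.subsingleton_of_isZero <| ShortComplex.Exact.isZero_of_both_zeros
    (Ext.covariant_sequence_exact₃' _
      (IsSMulRegular.smulShortComplex_shortExact (M := .of R M) hx) i (i + 1) rfl)
    (hzero.eq_zero_of_src _) (hzero_succ.eq_zero_of_tgt _)

lemma mem_support_torsionBySet_of_mem_associatedPrimes {P : Ideal R} (hP : P ∈ associatedPrimes R M)
    {p : PrimeSpectrum R} (hPp : P ≤ p.asIdeal) :
    p ∈ Module.support R (Submodule.torsionBySet R M P) := by
  obtain ⟨y, hy⟩ := (isAssociatedPrime_iff.1 hP).2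
  have hmem : ∀ r, r ∈ P ↔ r • y = 0 := fun r ↦ by
    rw [hy, Submodule.mem_colon_singleton, Submodule.mem_bot]
  have hyP : y ∈ Submodule.torsionBySet R M P :=
    (Submodule.mem_torsionBySet_iff _ _).2 fun r ↦ (hmem r).1 r.2
  refine Module.mem_support_iff_of_finite.2 fun r hr ↦ hPp ((hmem r).2 ?_)
  exact congr_arg Subtype.val (Module.mem_annihilator.1 hr ⟨y, hyP⟩)

-- For `N = {y ∈ M | P y = 0}`, the module `N/xN` embeds into `M/xM`, and its support consists of
-- primes containing `P` and `x`.
lemma exists_lt_mem_associatedPrimes_quotSMulTop {P : Ideal R}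
    (hP : P ∈ associatedPrimes R M) {m : PrimeSpectrum R} (hPm : P ≤ m.asIdeal) {x : R}
    (hxm : x ∈ m.asIdeal) (hx : IsSMulRegular M x) :
    ∃ Q ∈ associatedPrimes R (QuotSMulTop x M), P < Q ∧ Q ≤ m.asIdeal := by
  set N := Submodule.torsionBySet R M P
  have hsupp : m ∈ Module.support R (QuotSMulTop x N) :=
    mem_support_quotSMulTop_iff.2 ⟨mem_support_torsionBySet_of_mem_associatedPrimes hP hPm, hxm⟩
  obtain ⟨Q, hQ, hQm⟩ := exists_mem_associatedPrimes_le_of_mem_support hsupp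
  refine ⟨Q, associatedPrimes.subset_of_injective
    (quotSMulTop_map_subtype_torsionBySet_injective hx P) hQ, ?_, hQm⟩
  obtain ⟨hQN, hxQ⟩ := mem_support_quotSMulTop_iff.1
    (mem_support_of_mem_associatedPrimes (P := ⟨Q, hQ.isPrime⟩) hQ)
  have hPQ : P ≤ Q := by
    refine le_trans ?_ (Module.annihilator_le_of_mem_support hQN)
    exact (Module.isTorsionBySet_iff_subset_annihilator _ _).1
      (Submodule.torsionBySet_isTorsionBySet (P : Set R))
  exact lt_of_le_of_ne hPQ fun h ↦
    notMem_of_mem_associatedPrimes_of_isSMulRegular hP hx (h ▸ hxQ)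

lemma le_coheight_of_mem_associatedPrimes {m : PrimeSpectrum R} {s : ℕ}
    (hM : GradeGE m.asIdeal M s) {P : PrimeSpectrum R} (hP : P.asIdeal ∈ associatedPrimes R M)
    (hPm : P ≤ m) : s ≤ Order.coheight P := by
  obtain ⟨rs, rfl, hrs, hreg⟩ := hM
  induction rs generalizing M P with
  | nil => simp
  | cons x rs ih =>
    rw [isWeaklyRegular_cons_iff] at hreg
    rw [List.forall_mem_cons] at hrs
    obtain ⟨Q, hQ, hPQ, hQm⟩ := exists_lt_mem_associatedPrimes_quotSMulTop hP hPm hrs.1 hreg.1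
    have hlen := ih (P := ⟨Q, hQ.isPrime⟩) hQ hQm hrs.2 hreg.2
    calc ((x :: rs).length : ℕ∞) = rs.length + 1 := by simp
      _ ≤ Order.coheight (⟨Q, hQ.isPrime⟩ : PrimeSpectrum R) + 1 := by gcongr
      _ ≤ Order.coheight P := Order.coheight_add_one_le hPQ

lemma le_coheight_add_one_of_mem_associatedPrimes_quotSMulTop [Small.{v} R] {m : PrimeSpectrum R}
    {s : ℕ} (hM : GradeGE m.asIdeal M s) {f : R} (hf : IsSMulRegular M f) {P : PrimeSpectrum R}
    (hP : P.asIdeal ∈ associatedPrimes R (QuotSMulTop f M)) (hPm : P ≤ m) :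
    s ≤ Order.coheight P + 1 := by
  obtain _ | s := s
  · simp
  obtain ⟨hPM, hfP⟩ := mem_support_quotSMulTop_iff.1 (mem_support_of_mem_associatedPrimes hP)
  have hsmul : m.asIdeal • (⊤ : Submodule R M) ≠ ⊤ :=
    smul_top_ne_top_iff_exists_mem_support.2 ⟨m, Module.mem_support_mono hPm hPM, le_rfl⟩
  exact_mod_cast add_le_add_left
    (le_coheight_of_mem_associatedPrimes (hM.quotSMulTop hsmul (hPm hfP) hf) hP hPm) 1

lemma add_one_le_height_of_mem_support_quotSMulTop {h : ℕ∞}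
    (hh : ∀ p ∈ Module.support R M, h ≤ Order.height p) {x : R} (hx : IsSMulRegular M x)
    {p : PrimeSpectrum R} (hp : p ∈ Module.support R (QuotSMulTop x M)) :
    h + 1 ≤ Order.height p := by
  obtain ⟨hpM, hxp⟩ := mem_support_quotSMulTop_iff.1 hp
  obtain ⟨P, hP, hPp⟩ := exists_mem_associatedPrimes_le_of_mem_support hpM
  have hlt : (⟨P, hP.isPrime⟩ : PrimeSpectrum R) < p := by
    refine lt_of_le_of_ne hPp fun hPp ↦ ?_
    exact notMem_of_mem_associatedPrimes_of_isSMulRegular hP hx (by rwa [← hPp] at hxp)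
  have hPsupp : ⟨P, hP.isPrime⟩ ∈ Module.support R M :=
    mem_support_of_mem_associatedPrimes (P := ⟨P, hP.isPrime⟩) hP
  exact (add_le_add_left (hh _ hPsupp) 1).trans (Order.height_add_one_le hlt)

end Modules

lemma add_le_height_add_coheight_of_isLocalRing {R : Type u} {M : Type v} [CommRing R]
    [IsNoetherianRing R] [IsLocalRing R] [Small.{v} R] [AddCommGroup M] [Module R M]
    [Module.Finite R M] {s : ℕ} (hM : GradeGE (IsLocalRing.maximalIdeal R) M s) {h : ℕ∞}
    (hh : ∀ p ∈ Module.support R M, h ≤ Order.height p)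
    {Q : PrimeSpectrum R} (hQ : Q ∈ Module.support R M) :
    h + s ≤ Order.height Q + Order.coheight Q := by
  induction s generalizing M h with
  | zero => simpa using (hh Q hQ).trans le_self_add
  | succ s ih =>
    obtain ⟨x, hxQ, hx⟩ | ⟨P, hP, hQP⟩ :=
      exists_mem_isSMulRegular_or_exists_le_associatedPrimes M Q.asIdeal
    · have hQm := IsLocalRing.le_maximalIdeal Q.isPrime.ne_top
      have hgrade := hM.quotSMulTop
        (smul_top_ne_top_iff_exists_mem_support.2
          ⟨IsLocalRing.closedPoint R, Module.mem_support_mono hQm hQ, le_rfl⟩) (hQm hxQ) hx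
      have := ih hgrade (fun p hp ↦ add_one_le_height_of_mem_support_quotSMulTop hh hx hp)
        (mem_support_quotSMulTop_iff.2 ⟨hQ, hxQ⟩)
      simpa [add_assoc, add_comm, add_left_comm] using this
    · have hlen : ((s + 1 : ℕ) : ℕ∞) ≤ Order.coheight Q :=
        (le_coheight_of_mem_associatedPrimes (m := IsLocalRing.closedPoint R) hM
          (P := ⟨P, hP.isPrime⟩) hP (IsLocalRing.le_maximalIdeal hP.isPrime.ne_top)).trans
          (Order.coheight_anti hQP)
      exact add_le_add (hh Q hQ) hlen

section Rings

variable {R : Type*} [CommRing R]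

lemma exists_comap_algebraMap_eq_of_le (m : Ideal R) [m.IsPrime] {Q : PrimeSpectrum R}
    (hQ : Q.asIdeal ≤ m) :
    ∃ q : PrimeSpectrum (Localization.AtPrime m), q.comap (algebraMap R _) = Q := by
  have hdisj : Disjoint (m.primeCompl : Set R) Q.asIdeal :=
    Set.disjoint_left.2 fun x hxm hxQ ↦ hxm (hQ hxQ)
  exact (PrimeSpectrum.localization_comap_range (Localization.AtPrime m) m.primeCompl).ge hdisj

lemma orderHeight_comap_algebraMap (S : Submonoid R) {R' : Type*} [CommRing R'] [Algebra R R']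
    [IsLocalization S R'] (q : PrimeSpectrum R') :
    Order.height (q.comap (algebraMap R R')) = Order.height q := by
  rw [← PrimeSpectrum.height_eq_orderHeight, ← PrimeSpectrum.height_eq_orderHeight]
  exact IsLocalization.height_under S q.asIdeal

lemma orderCoheight_le_comap_algebraMap (S : Submonoid R) {R' : Type*} [CommRing R'] [Algebra R R']
    [IsLocalization S R'] (q : PrimeSpectrum R') :
    Order.coheight q ≤ Order.coheight (q.comap (algebraMap R R')) := by
  refine Order.coheight_le_coheight_apply_of_strictMono _ (Monotone.strictMono_of_injective ?_ ?_) q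
  · exact fun _ _ h ↦ Ideal.comap_mono h
  · exact PrimeSpectrum.localization_comap_injective R' S

lemma GradeGE.localization {m : Ideal R} [m.IsPrime] {s : ℕ} (hR : GradeGE m R s) :
    GradeGE (IsLocalRing.maximalIdeal (Localization.AtPrime m)) (Localization.AtPrime m) s := by
  obtain ⟨rs, hlen, hrs, hreg⟩ := hR
  refine ⟨rs.map (algebraMap R _), by simpa using hlen, List.forall_mem_map.2 fun r hr ↦ ?_,
    hreg.of_isLocalization _ m.primeCompl⟩
  exact (IsLocalization.AtPrime.to_map_mem_maximal_iff _ m r).2 (hrs r hr)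

lemma le_height_add_coheight_of_gradeGE [IsNoetherianRing R] {m : Ideal R} [m.IsPrime] {n : ℕ}
    (hR : GradeGE m R n) {Q : PrimeSpectrum R} (hQ : Q.asIdeal ≤ m) :
    n ≤ Order.height Q + Order.coheight Q := by
  obtain ⟨q, rfl⟩ := exists_comap_algebraMap_eq_of_le m hQ
  have : IsNoetherianRing (Localization.AtPrime m) :=
    IsLocalization.isNoetherianRing m.primeCompl _ inferInstance
  calc (n : ℕ∞) = 0 + n := (zero_add _).symm
    _ ≤ Order.height q + Order.coheight q :=
        add_le_height_add_coheight_of_isLocalRing hR.localization (fun _ _ ↦ zero_le)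
          (Module.mem_support_iff_of_finite.2
            ((Module.annihilator_eq_bot.2 inferInstance).trans_le bot_le))
    _ ≤ _ := add_le_add (orderHeight_comap_algebraMap m.primeCompl q).ge
        (orderCoheight_le_comap_algebraMap m.primeCompl q)

lemma coheight_le_ringKrullDim_quotient {A : Ideal R} {Q : PrimeSpectrum R} (hQ : A ≤ Q.asIdeal) :
    Order.coheight Q ≤ ringKrullDim (R ⧸ A) := by
  rw [Order.coheight_eq_krullDim_Ici, ringKrullDim_quotient]
  exact Order.krullDim_le_of_strictMono (fun p ↦ ⟨p.1, hQ.trans p.2⟩) fun _ _ h ↦ h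

lemma height_add_coheight_le_of_ringKrullDim_le {n : ℕ} (hR : ringKrullDim R ≤ n)
    (p : PrimeSpectrum R) : Order.height p + Order.coheight p ≤ n := by
  have : Nonempty (PrimeSpectrum R) := ⟨p⟩
  rw [ringKrullDim, Order.krullDim_eq_iSup_height_add_coheight_of_nonempty] at hR
  exact (le_iSup (fun a : PrimeSpectrum R ↦ Order.height a + Order.coheight a) p).trans
    (by exact_mod_cast hR)

/-- The third isomorphism theorem `(R/A)/f(R/A) ≃ R/(A + (f))`. -/
noncomputable def quotSMulTopQuotientEquiv (A : Ideal R) (f : R) :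
    QuotSMulTop f (R ⧸ A) ≃ₗ[R] R ⧸ A ⊔ Ideal.span {f} :=
  have h : f • (⊤ : Submodule R (R ⧸ A)) = Submodule.map A.mkQ (Ideal.span {f}) := by
    rw [← Ideal.mul_top (Ideal.span {f}), ← smul_eq_mul, Submodule.ideal_span_singleton_smul,
      Submodule.map_pointwise_smul, Submodule.map_top, Submodule.range_mkQ]
  Submodule.quotEquivOfEq _ _ h ≪≫ₗ Submodule.quotientQuotientEquivQuotientSup _ _

lemma GradeGE.of_quotient {A m : Ideal R} {s : ℕ}
    (h : GradeGE (m.map (Ideal.Quotient.mk A)) (R ⧸ A) s) : GradeGE m (R ⧸ A) s := by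
  obtain ⟨rs, hlen, hrs, hreg⟩ := h
  have hlift : ∀ r ∈ rs, ∃ t ∈ m, algebraMap R (R ⧸ A) t = r := fun r hr ↦
    (Ideal.mem_map_iff_of_surjective _ Ideal.Quotient.mk_surjective).1 (hrs r hr)
  choose! t ht htr using hlift
  refine ⟨rs.map t, by simpa using hlen, List.forall_mem_map.2 ht, ?_⟩
  have hmap : (rs.map t).map (algebraMap R (R ⧸ A)) = rs := by
    rw [List.map_map]
    exact (List.map_congr_left htr).trans (List.map_id rs)
  rwa [← isWeaklyRegular_map_algebraMap_iff (R ⧸ A), hmap]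

lemma mem_support_quotient_iff {A : Ideal R} {p : PrimeSpectrum R} :
    p ∈ Module.support R (R ⧸ A) ↔ A ≤ p.asIdeal := by
  rw [Module.mem_support_iff_of_finite, Ideal.annihilator_quotient]

lemma isSMulRegular_quotient_of_colon_span_singleton_eq {A : Ideal R} {f : R}
    (hf : A.colon (Ideal.span {f} : Ideal R) = A) : IsSMulRegular (R ⧸ A) f := by
  refine (isSMulRegular_quotient_iff_mem_of_smul_mem _ _).2 fun r hr ↦ hf.le ?_
  rwa [Ideal.mem_colon_span_singleton, mul_comm]

-- From the exact sequence `0 → R/B → R/(A + fB) → R/(A + (f)) → 0`, whose first map is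
-- multiplication by `f`.
lemma associatedPrimes_quotient_sup_span_singleton_mul_subset {A B : Ideal R} (hAB : A ≤ B) {f : R}
    (hf : IsSMulRegular (R ⧸ A) f) :
    associatedPrimes R (R ⧸ A ⊔ Ideal.span {f} * B) ⊆
      associatedPrimes R (R ⧸ B) ∪ associatedPrimes R (R ⧸ A ⊔ Ideal.span {f}) := by
  have hBle : B ≤ Submodule.comap (LinearMap.lsmul R R f) (A ⊔ Ideal.span {f} * B) := fun b hb ↦
    Ideal.mem_sup_right (Ideal.mul_mem_mul (Ideal.mem_span_singleton_self f) hb)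
  have hle : A ⊔ Ideal.span {f} * B ≤ A ⊔ Ideal.span {f} := sup_le_sup_left Ideal.mul_le_left A
  refine associatedPrimes.subset_union_of_exact
    (f := Submodule.mapQ B _ (LinearMap.lsmul R R f) hBle) (g := Submodule.factor hle) ?_ ?_
  · rw [← LinearMap.ker_eq_bot, Submodule.ker_mapQ, ← le_bot_iff, Submodule.map_le_iff_le_comap,
      Submodule.comap_bot, Submodule.ker_mkQ]
    intro u hu
    obtain ⟨a, ha, c, hc, hac⟩ := Submodule.mem_sup.1 hu
    obtain ⟨b, hb, rfl⟩ := Ideal.mem_span_singleton_mul.1 hc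
    have hub : f • (u - b) = a := by
      rw [smul_sub, sub_eq_iff_eq_add]
      exact hac.symm
    have huA : u - b ∈ A := (isSMulRegular_quotient_iff_mem_of_smul_mem A f).1 hf _ (hub ▸ ha)
    exact (Submodule.sub_mem_iff_left B hb).1 (hAB huA)
  · have hrange : LinearMap.range (LinearMap.lsmul R R f) = Ideal.span {f} := by
      ext
      simp [Ideal.mem_span_singleton', mul_comm]
    have hA : Submodule.map (A ⊔ Ideal.span {f} * B).mkQ A = ⊥ := by
      rw [← LinearMap.le_ker_iff_map, Submodule.ker_mkQ]
      exact le_sup_left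
    rw [LinearMap.exact_iff, Submodule.range_mapQ, hrange, Submodule.factor, Submodule.ker_mapQ,
      Submodule.comap_id, Submodule.map_sup, hA, bot_sup_eq]

variable [IsNoetherianRing R]

lemma height_add_one_le_of_isSMulRegular {A : Ideal R} {f : R} (hf : IsSMulRegular (R ⧸ A) f)
    {p : PrimeSpectrum R} (hA : A ≤ p.asIdeal) (hfp : f ∈ p.asIdeal) :
    A.height + 1 ≤ p.asIdeal.height := by
  rw [PrimeSpectrum.height_eq_orderHeight]
  refine add_one_le_height_of_mem_support_quotSMulTop (M := R ⧸ A) (fun q hq ↦ ?_) hf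
    (mem_support_quotSMulTop_iff.2 ⟨mem_support_quotient_iff.2 hA, hfp⟩)
  rw [← PrimeSpectrum.height_eq_orderHeight]
  exact Ideal.height_mono (mem_support_quotient_iff.1 hq)

-- The primes over `A + fB` contain `B` or `A + (f)`.
lemma height_sup_span_singleton_mul {A B : Ideal R} (hAB : A ≤ B)
    (hht : A.height + 1 = B.height) {f : R} (hf : IsSMulRegular (R ⧸ A) f) :
    (A ⊔ Ideal.span {f} * B).height = B.height := by
  refine le_antisymm (Ideal.height_mono (sup_le hAB Ideal.mul_le_right)) ?_
  rw [(A ⊔ _).height_eq_inf_minimalPrimes]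
  refine le_iInf₂ fun p hp ↦ ?_
  have hprime := hp.1.1
  obtain ⟨hAp, hfBp⟩ := sup_le_iff.1 hp.1.2
  obtain hfp | hBp := hprime.mul_le.1 hfBp
  · rw [← hht]
    exact height_add_one_le_of_isSMulRegular (p := ⟨p, hprime⟩) hf hAp
      (hfp (Ideal.mem_span_singleton_self f))
  · exact Ideal.height_mono hBp

lemma exists_mem_associatedPrimes_height_eq {A : Ideal R} (hA : A ≠ ⊤) :
    ∃ Q ∈ associatedPrimes R (R ⧸ A), A ≤ Q ∧ Q.height = A.height := by
  obtain ⟨h, hh⟩ := ENat.ne_top_iff_exists.1 (Ideal.height_ne_top hA)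
  obtain ⟨p, hp, hAp, hph⟩ := Ideal.exists_isPrime_height_eq hh.symm
  obtain ⟨Q, hQ, hQp⟩ := exists_mem_associatedPrimes_le_of_mem_support
    (mem_support_quotient_iff.2 hAp : (⟨p, hp⟩ : PrimeSpectrum R) ∈ _)
  have hAQ : A ≤ Q := mem_support_quotient_iff.1
    (mem_support_of_mem_associatedPrimes (P := ⟨Q, hQ.isPrime⟩) hQ)
  exact ⟨Q, hQ, hAQ,
    le_antisymm ((Ideal.height_mono hQp).trans_eq (hph.trans hh)) (Ideal.height_mono hAQ)⟩

lemma le_height_add_of_gradeGE {m : Ideal R} [m.IsPrime] {n s : ℕ} (hR : GradeGE m R n)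
    {A : Ideal R} (hA : ∀ Q ∈ associatedPrimes R (R ⧸ A), Q ≤ m)
    (hs : ringKrullDim (R ⧸ A) ≤ s) : n ≤ A.height + s := by
  obtain rfl | hne := eq_or_ne A ⊤
  · simp
  obtain ⟨Q, hQ, hAQ, hQht⟩ := exists_mem_associatedPrimes_height_eq hne
  let q : PrimeSpectrum R := ⟨Q, hQ.isPrime⟩
  have hcoht : Order.coheight q ≤ s := by
    exact_mod_cast (coheight_le_ringKrullDim_quotient hAQ).trans hs
  calc (n : ℕ∞) ≤ Order.height q + Order.coheight q :=
        le_height_add_coheight_of_gradeGE hR (hA Q hQ)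
    _ = A.height + Order.coheight q := by rw [← PrimeSpectrum.height_eq_orderHeight, hQht]
    _ ≤ A.height + s := by gcongr

lemma height_le_height_add_one_of_mem_associatedPrimes_quotSMulTop {m : PrimeSpectrum R} {n s : ℕ}
    (hdim : ringKrullDim R ≤ n) (hR : GradeGE m.asIdeal R n) {A : Ideal R}
    (hA : ∀ Q ∈ associatedPrimes R (R ⧸ A), Q ≤ m.asIdeal)
    (hs : ringKrullDim (R ⧸ A) ≤ s) (hgrade : GradeGE m.asIdeal (R ⧸ A) s) {f : R}
    (hf : IsSMulRegular (R ⧸ A) f) {P : Ideal R}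
    (hP : P ∈ associatedPrimes R (QuotSMulTop f (R ⧸ A))) (hPm : P ≤ m.asIdeal) :
    P.height ≤ A.height + 1 := by
  let p : PrimeSpectrum R := ⟨P, hP.isPrime⟩
  have hcoht : s ≤ Order.coheight p + 1 :=
    le_coheight_add_one_of_mem_associatedPrimes_quotSMulTop hgrade hf hP hPm
  refine (ENat.add_le_add_iff_right (ENat.natCast_ne_top s)).1 ?_
  calc P.height + s = Order.height p + s := by rw [← PrimeSpectrum.height_eq_orderHeight]
    _ ≤ Order.height p + Order.coheight p + 1 := by rw [add_assoc]; gcongr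
    _ ≤ n + 1 := by gcongr; exact height_add_coheight_le_of_ringKrullDim_le hdim p
    _ ≤ A.height + s + 1 := by gcongr; exact le_height_add_of_gradeGE hR hA hs
    _ = A.height + 1 + s := add_right_comm _ _ _

end Rings

section Polynomials

variable {σ R : Type*} [CommRing R]

lemma isSMulRegular_X_quotient_span_X_image {s : Set σ} {i : σ} (hi : i ∉ s) :
    IsSMulRegular (MvPolynomial σ R ⧸ Ideal.span (X '' s : Set (MvPolynomial σ R)))
      (X i : MvPolynomial σ R) := by
  refine (isSMulRegular_quotient_iff_mem_of_smul_mem _ _).2 fun p hp ↦ ?_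
  rw [smul_eq_mul, mem_ideal_span_X_image] at hp
  refine mem_ideal_span_X_image.2 fun m hm ↦ ?_
  obtain ⟨j, hj, hmj⟩ := hp (Finsupp.single i 1 + m) (by simpa [mem_support_iff] using hm)
  have hij : i ≠ j := (ne_of_mem_of_not_mem hj hi).symm
  exact ⟨j, hj, by simpa [hij] using hmj⟩

lemma isWeaklyRegular_map_X {l : List σ} (hl : l.Nodup) :
    IsWeaklyRegular (MvPolynomial σ R) (l.map (X : σ → MvPolynomial σ R)) := by
  refine (isWeaklyRegular_iff _ _).2 fun i hi ↦ ?_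
  have hspan : Ideal.ofList ((l.map (X : σ → MvPolynomial σ R)).take i) • ⊤ =
      Ideal.span ((X : σ → MvPolynomial σ R) '' {j | j ∈ l.take i}) := by
    rw [smul_eq_mul, Ideal.mul_top, ← List.map_take, Ideal.ofList]
    congr 1
    ext
    simp only [Set.mem_ofPred_eq, List.mem_map, Set.mem_image]
  rw [hspan, List.getElem_map]
  refine isSMulRegular_X_quotient_span_X_image fun hmem ↦ ?_
  obtain ⟨j, hj, hij⟩ := List.mem_take_iff_getElem.1 hmem
  have := hl.getElem_inj_iff.1 hij
  lia

variable (R) in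
lemma gradeGE_idealOfVars [Fintype σ] :
    GradeGE (idealOfVars σ R) (MvPolynomial σ R) (Fintype.card σ) := by
  refine ⟨Finset.univ.toList.map X, by simp, ?_, isWeaklyRegular_map_X (Finset.nodup_toList _)⟩
  exact List.forall_mem_map.2 fun i _ ↦ Ideal.subset_span (Set.mem_range_self i)

lemma mem_idealOfVars_iff_constantCoeff_eq_zero {p : MvPolynomial σ R} :
    p ∈ idealOfVars σ R ↔ constantCoeff p = 0 := by
  simpa [Finsupp.degree_eq_zero_iff, constantCoeff_eq] using mem_pow_idealOfVars_iff' 1 p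

lemma isPrime_idealOfVars [IsDomain R] : (idealOfVars σ R).IsPrime := by
  have hker : idealOfVars σ R = RingHom.ker constantCoeff :=
    Ideal.ext fun _ ↦ mem_idealOfVars_iff_constantCoeff_eq_zero.trans (RingHom.mem_ker ..).symm
  exact hker ▸ RingHom.ker_isPrime _

attribute [local instance] MvPolynomial.gradedAlgebra

-- If `r = c - t` with `c` a constant, then `r` divides `c ^ (k + 1) - t ^ (k + 1)`, and the second
-- term does not contribute in degree `k`.
lemma mem_of_mul_mem_of_isUnit_constantCoeff {J : Ideal (MvPolynomial σ R)}
    (hJ : J.IsHomogeneous (homogeneousSubmodule σ R)) {r u : MvPolynomial σ R}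
    (hr : IsUnit (constantCoeff r)) (hru : r * u ∈ J) : u ∈ J := by
  refine (mem_iff_homogeneousComponent_mem hJ u).2 fun k ↦ ?_
  set c := constantCoeff r
  set t := C c - r with ht
  have htk : t ^ (k + 1) * u ∈ idealOfVars σ R ^ (k + 1) :=
    Ideal.mul_mem_right _ _ <| Ideal.pow_mem_pow
      (mem_idealOfVars_iff_constantCoeff_eq_zero.2 (by simp [ht, c])) _
  have hzero : homogeneousComponent k (t ^ (k + 1) * u) = 0 := by
    ext b
    rw [coeff_homogeneousComponent, coeff_zero]
    split_ifs with hb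
    · exact (mem_pow_idealOfVars_iff' _ _).1 htk b (by lia)
    · rfl
  have hdvd : r ∣ C (c ^ (k + 1)) - t ^ (k + 1) := by
    simpa [ht] using sub_dvd_pow_sub_pow (C c) t (k + 1)
  have hmem := homogeneousComponent_mem_of_mem hJ
    (J.mem_of_dvd (mul_dvd_mul_right hdvd u) hru) k
  rw [sub_mul, map_sub, hzero, sub_zero, homogeneousComponent_C_mul] at hmem
  exact (J.unit_mul_mem_iff_mem ((hr.pow (k + 1)).map C)).1 hmem

lemma le_idealOfVars_of_mem_associatedPrimes {J : Ideal (MvPolynomial σ K)}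
    (hJ : J.IsHomogeneous (homogeneousSubmodule σ K)) {P : Ideal (MvPolynomial σ K)}
    (hP : P ∈ associatedPrimes (MvPolynomial σ K) (MvPolynomial σ K ⧸ J)) :
    P ≤ idealOfVars σ K := by
  intro r hr
  refine mem_idealOfVars_iff_constantCoeff_eq_zero.2 (by_contra fun hr0 ↦ ?_)
  refine notMem_of_mem_associatedPrimes_of_isSMulRegular hP ?_ hr
  exact (isSMulRegular_quotient_iff_mem_of_smul_mem _ _).2 fun u hu ↦
    mem_of_mul_mem_of_isUnit_constantCoeff hJ (isUnit_iff_ne_zero.2 hr0) hu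

lemma isHomogeneous_of_isHomogeneousIdeal {n : ℕ} {I : Ideal (MvPolynomial (Fin n) K)}
    (hI : IsHomogeneousIdeal I) : I.IsHomogeneous (homogeneousSubmodule (Fin n) K) :=
  fun k p hp ↦ (decomposition.decompose'_apply p k).symm ▸ hI p hp k

end Polynomials

lemma idealHeight_eq_height {R : Type*} [CommRing R] (I : Ideal R) : idealHeight I = I.height := by
  refine le_antisymm ?_ (le_iInf₂ fun p hp ↦ ?_)
  · rw [I.height_eq_inf_minimalPrimes]
    refine le_iInf₂ fun p hp ↦ ?_
    have hprime := hp.1.1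
    exact (iInf₂_le (⟨p, hprime⟩ : PrimeSpectrum R) hp.1.2).trans_eq
      (PrimeSpectrum.height_eq_orderHeight _).symm
  · rw [← PrimeSpectrum.height_eq_orderHeight]
    exact Ideal.height_mono hp

section CohenMacaulay

variable {n : ℕ} {A : Ideal (MvPolynomial (Fin n) K)}

lemma exists_gradeGE_of_quotientIsCohenMacaulay {σ : Type*} {I : Ideal (MvPolynomial σ K)}
    (hI : QuotientIsCohenMacaulay I) :
    ∃ s : ℕ, GradeGE (idealOfVars σ K) (MvPolynomial σ K ⧸ I) s ∧
      ringKrullDim (MvPolynomial σ K ⧸ I) = s := by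
  obtain ⟨rs, hrs, hreg, hdim⟩ := hI
  exact ⟨rs.length, GradeGE.of_quotient ⟨rs, rfl, hrs, hreg.toIsWeaklyRegular⟩, hdim.symm⟩

attribute [local instance] MvPolynomial.gradedAlgebra

lemma height_eq_height_add_one_of_mem_associatedPrimes_sup_span_singleton
    (hA : A.IsHomogeneous (homogeneousSubmodule (Fin n) K)) (hCM : QuotientIsCohenMacaulay A)
    {f : MvPolynomial (Fin n) K} {d : ℕ} (hf : f.IsHomogeneous d)
    (hreg : IsSMulRegular (MvPolynomial (Fin n) K ⧸ A) f) {P : Ideal (MvPolynomial (Fin n) K)}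
    (hP : P ∈ associatedPrimes (MvPolynomial (Fin n) K)
      (MvPolynomial (Fin n) K ⧸ A ⊔ Ideal.span {f})) :
    P.height = A.height + 1 := by
  have hle : A ⊔ Ideal.span {f} ≤ P := mem_support_quotient_iff.1
    (mem_support_of_mem_associatedPrimes (P := ⟨P, hP.isPrime⟩) hP)
  refine le_antisymm ?_ (height_add_one_le_of_isSMulRegular (p := ⟨P, hP.isPrime⟩) hreg
    (le_sup_left.trans hle) (hle (Ideal.mem_sup_right (Ideal.mem_span_singleton_self f))))
  have hsup : (A ⊔ Ideal.span {f}).IsHomogeneous (homogeneousSubmodule (Fin n) K) :=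
    hA.sup (Ideal.homogeneous_span _ _ (by simpa using ⟨d, hf⟩))
  have hdim : ringKrullDim (MvPolynomial (Fin n) K) ≤ n := by
    rw [MvPolynomial.ringKrullDim_of_isNoetherianRing, ringKrullDim_eq_zero_of_field]
    simp
  obtain ⟨s, hgrade, hs⟩ := exists_gradeGE_of_quotientIsCohenMacaulay hCM
  exact height_le_height_add_one_of_mem_associatedPrimes_quotSMulTop
    (m := ⟨idealOfVars (Fin n) K, isPrime_idealOfVars⟩) hdim
    (by simpa using gradeGE_idealOfVars (σ := Fin n) K)
    (fun Q hQ ↦ le_idealOfVars_of_mem_associatedPrimes hA hQ) hs.le hgrade hreg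
    (by rwa [LinearEquiv.AssociatedPrimes.eq (quotSMulTopQuotientEquiv A f)])
    (le_idealOfVars_of_mem_associatedPrimes hsup hP)

end CohenMacaulay

theorem basicDoubleLink_height_unmixed_general {n : ℕ} (A B : Ideal (MvPolynomial (Fin n) K))
    (hA : IsHomogeneousIdeal A) (hAB : A ≤ B) (hht : idealHeight A + 1 = idealHeight B)
    (f : MvPolynomial (Fin n) K) (d : ℕ) (hf : f.IsHomogeneous d)
    (hcolon : Submodule.colon A (Ideal.span {f}) = A) :
    idealHeight (A ⊔ Ideal.span {f} * B) = idealHeight B ∧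
      (IsUnmixed B → QuotientIsCohenMacaulay A → IsUnmixed (A ⊔ Ideal.span {f} * B)) := by
  have hreg := isSMulRegular_quotient_of_colon_span_singleton_eq hcolon
  simp only [IsUnmixed, idealHeight_eq_height] at hht ⊢
  have hheight := height_sup_span_singleton_mul hAB hht hreg
  refine ⟨hheight, fun hB hCM P hP ↦ ?_⟩
  rw [hheight]
  obtain hPB | hPAf := associatedPrimes_quotient_sup_span_singleton_mul_subset hAB hreg hP
  · exact hB P hPB
  · rw [← hht]
    exact height_eq_height_add_one_of_mem_associatedPrimes_sup_span_singleton
      (isHomogeneous_of_isHomogeneousIdeal hA) hCM hf hreg hPAf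

/-- Let `A ⊆ B` be homogeneous ideals of `R = K[x_0,…,x_n]` with
`ht A = ht B - 1`, and let `f` be homogeneous of degree `d` with `A : f = A`. Then the Basic
Double Link `C = A + f·B` satisfies `ht C = ht B`; moreover, if `B` is unmixed and `R/A` is
Cohen-Macaulay, then `C` is unmixed. -/
theorem basicDoubleLink_height_unmixed {n : ℕ}
    (A B : Ideal (MvPolynomial (Fin n) K))
    (hA : IsHomogeneousIdeal A) (hB : IsHomogeneousIdeal B) (hAB : A ≤ B)
    (hht : idealHeight A + 1 = idealHeight B)
    (f : MvPolynomial (Fin n) K) (d : ℕ) (hf : f.IsHomogeneous d)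
    (hcolon : Submodule.colon A (Ideal.span {f}) = A)
    (C : Ideal (MvPolynomial (Fin n) K)) (hC : C = A ⊔ Ideal.span {f} * B) :
    idealHeight C = idealHeight B ∧
      (IsUnmixed B → QuotientIsCohenMacaulay A → IsUnmixed C) := by
  subst hC
  exact basicDoubleLink_height_unmixed_general A B hA hAB hht f d hf hcolon
end
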